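/- Let F be an algebraically closed field of characteristic 2. Then the automorphism group of the algebra E4 with MSC [[1,0,0,1],[0,0,0,0]] is trivial: Aut(E4) = {I}. -/

import Mathlib

open Matrix Kronecker

variable {F : Type*}

/-- The Kronecker (tensor) product of two `2 × 2` matrices, realized as a `4 × 4` matrix;
rows/columns are indexed in row-major order by the pairs `(1,1), (1,2), (2,1), (2,2)`. -/
def kron [CommRing F] (g h : Matrix (Fin 2) (Fin 2) F) : Matrix (Fin 4) (Fin 4) F :=
  Matrix.reindex finProdFinEquiv finProdFinEquiv (g ⊗ₖ h)

/-- Two `2`-dimensional algebras given by matrices of structure constants `A, B`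
are isomorphic iff `B = g · A · (g⁻¹ ⊗ g⁻¹)` for some `g ∈ GL(2, F)`. -/
def Isomorphic [Field F] (A B : Matrix (Fin 2) (Fin 4) F) : Prop :=
  ∃ g : GL (Fin 2) F,
    B = (g : Matrix (Fin 2) (Fin 2) F) * A *
        kron ((↑(g⁻¹) : Matrix (Fin 2) (Fin 2) F)) ((↑(g⁻¹) : Matrix (Fin 2) (Fin 2) F))

/-- The automorphism group of the algebra with MSC `E`, as a set of (invertible) `2 × 2`
matrices: `Aut(E) = {g ∈ GL(2,F) : g·E = E·(g ⊗ g)}`. -/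
def Aut [Field F] (E : Matrix (Fin 2) (Fin 4) F) : Set (Matrix (Fin 2) (Fin 2) F) :=
  {g | IsUnit g ∧ g * E = E * kron g g}

/-- The derivation algebra of the algebra with MSC `E`:
`Der(E) = { D : E·(D ⊗ I + I ⊗ D) = D·E }`. -/
def Der [Field F] (E : Matrix (Fin 2) (Fin 4) F) : Set (Matrix (Fin 2) (Fin 2) F) :=
  {D | E * (kron D 1 + kron 1 D) = D * E}

/-!
The algebra has product `x · y = ⟨x, y⟩ e₁` for the standard bilinear form `⟨·, ·⟩`. Hence an
automorphism `g` satisfies `⟨g x, g y⟩ e₁ = ⟨x, y⟩ g e₁`: it maps `e₁` to some `λ e₁` and multiplies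
the form by `λ`. Comparing `⟨g e₁, g e₁⟩ = λ²` with `λ`, a unit, gives `λ = 1`. Then
`⟨g e₁, g e₂⟩ = 0` and `⟨g e₂, g e₂⟩ = 1` leave only `g = diag(1, d)` with `d² = 1`; in
characteristic two this reads `(d - 1)² = 0`.
-/

lemma kron_apply {R : Type*} [CommRing R] (g h : Matrix (Fin 2) (Fin 2) R) (i j : Fin (2 * 2)) :
    kron g h i j = g i.divNat j.divNat * h i.modNat j.modNat :=
  rfl

namespace E4

variable {R : Type*} [CommRing R]

variable (R) in
/-- The matrix of structure constants of the algebra `E4`, over an arbitrary commutative ring. -/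
def msc : Matrix (Fin 2) (Fin 4) R :=
  !![1, 0, 0, 1; 0, 0, 0, 0]

lemma mul_msc (g : Matrix (Fin 2) (Fin 2) R) :
    g * msc R = !![g 0 0, 0, 0, g 0 0; g 1 0, 0, 0, g 1 0] := by
  ext i j
  fin_cases i <;> fin_cases j <;> simp [msc, Matrix.mul_apply]

lemma msc_mul_kron (g h : Matrix (Fin 2) (Fin 2) R) :
    msc R * kron g h =
      !![(gᵀ * h) 0 0, (gᵀ * h) 0 1, (gᵀ * h) 1 0, (gᵀ * h) 1 1; 0, 0, 0, 0] := by
  ext i j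
  fin_cases i <;> fin_cases j <;>
    simp [msc, Matrix.mul_apply, Fin.sum_univ_succ, kron_apply, Fin.divNat, Fin.modNat]

lemma mul_msc_eq_iff {g : Matrix (Fin 2) (Fin 2) R} :
    g * msc R = msc R * kron g g ↔ g 1 0 = 0 ∧ gᵀ * g = g 0 0 • 1 := by
  rw [mul_msc, msc_mul_kron]
  constructor
  · intro h
    have entry (i : Fin 2) (j : Fin 4) := congrFun₂ h i j
    refine ⟨entry 1 0, ?_⟩
    ext i j
    fin_cases i <;> fin_cases j
    · simpa using (entry 0 0).symm
    · simpa using (entry 0 1).symm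
    · simpa using (entry 0 2).symm
    · simpa using (entry 0 3).symm
  · rintro ⟨h10, hform⟩
    simp [hform, h10]

lemma isUnit_and_mul_msc_eq_iff_exists_diag {g : Matrix (Fin 2) (Fin 2) R} :
    IsUnit g ∧ g * msc R = msc R * kron g g ↔ ∃ d : R, d ^ 2 = 1 ∧ g = !![1, 0; 0, d] := by
  rw [mul_msc_eq_iff]
  constructor
  · rintro ⟨hg, h10, hform⟩
    have hunit : IsUnit (g 0 0) := by
      rw [Matrix.isUnit_iff_isUnit_det, Matrix.det_fin_two, h10, mul_zero, sub_zero] at hg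
      exact isUnit_of_mul_isUnit_left hg
    have h00 : g 0 0 = 1 := by
      have hidem : g 0 0 * g 0 0 = g 0 0 := by
        simpa [Matrix.mul_apply, h10] using congrFun₂ hform 0 0
      exact (IsIdempotentElem.iff_eq_one_of_isUnit hunit).1 hidem
    have h01 : g 0 1 = 0 := by
      simpa [Matrix.mul_apply, h10, h00] using congrFun₂ hform 0 1
    have h11 : g 1 1 ^ 2 = 1 := by
      simpa [Matrix.mul_apply, h00, h01, sq] using congrFun₂ hform 1 1
    exact ⟨g 1 1, h11, by rw [Matrix.eta_fin_two g, h00, h01, h10]; simp⟩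
  · rintro ⟨d, hd, rfl⟩
    refine ⟨?_, rfl, ?_⟩
    · simpa [Matrix.isUnit_iff_isUnit_det] using IsUnit.of_pow_eq_one hd two_ne_zero
    · ext i j
      fin_cases i <;> fin_cases j <;> simp [Matrix.mul_apply, ← sq, hd]

end E4

theorem aut_E4_char_two_general (R : Type*) [CommRing R] [IsReduced R] [CharP R 2] :
    {g : Matrix (Fin 2) (Fin 2) R | IsUnit g ∧ g * E4.msc R = E4.msc R * kron g g} = {1} := by
  ext g
  have sq_eq_one_iff (d : R) : d ^ 2 = 1 ↔ d = 1 := by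
    simpa using ExpChar.pow_prime_pow_mul_eq_one_iff 2 1 1 d
  simp only [Set.mem_ofPred_eq, Set.mem_singleton_iff, E4.isUnit_and_mul_msc_eq_iff_exists_diag,
    sq_eq_one_iff, exists_eq_left, Matrix.one_fin_two]

theorem aut_E4_char_two (F : Type*) [Field F] [IsAlgClosed F] [CharP F 2] :
    Aut (!![1, 0, 0, 1; 0, 0, 0, 0] : Matrix (Fin 2) (Fin 4) F) = {1} :=
  aut_E4_char_two_general F
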